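/- Existence and uniqueness of balanced solutions: assume the matrices I + Δ_r(x)/2 and I − Δ_r(x)/2 are invertible for every x ∈ (a,b). Then for every x0 ∈ (a,b) and every u0 ∈ ℂⁿ there exists exactly one balanced solution u of u' = ru + g dν on (a,b) with u(x0) = u0. -/

import Mathlib

/-!
At an atom `x` of `ν` the balanced value satisfies `u(x) = u⁻(x) + ½ ν{x} (M(x) u(x) + g(x))`, and
`u⁺(x) - u⁻(x) = ν{x} (M(x) u(x) + g(x))`. Hence a balanced solution is the same thing as a function
with `u(d) - u(c) = ½ (∫_{[c,d)} + ∫_{(c,d]}) (M u + g) dν` for `c ≤ d`; this pointwise form of the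
equation is `LocSol`, and the two directions of the equivalence are
`LocSol.isBalancedSolution` and `IsBalancedSolution.locSol`.

To the right of `x₀` the pointwise equation reads `(I - ½ Δ_r(x)) u(x) = z(x) + ½ ν{x} g(x)` with
`z(x) = p + ∫_{[x₀,x)} (M u + g) dν`. Since `I - ½ Δ_r(x)` is invertible, `u` can be eliminated, and
`z` solves an explicit Volterra equation `z(x) = c(x) + ∫_{t<x} A(t) z(t) dν(t)` with
`A = M (I - ½ Δ_r)⁻¹`. The resolvent `(I - ½ Δ_r)⁻¹` is bounded on compact intervals, because
`‖Δ_r(x)‖ < 1` off a finite set (`exists_bound_jumpResolvent`), so `A` is `ν`-integrable.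
The integral runs over `t < x` only, and the `k`-fold iterated integrals of a finite measure of mass
`T` over `t₁ < t₂ < ⋯ < x` are at most `T ^ k / k!`, atoms or not (`volterraIter_le`). This makes the
Picard series converge (`volterra_exists`) and forces solutions of the homogeneous equation to vanish
(`volterra_gronwall`).

To the left of `x₀` the reflection `x ↦ -x` turns the problem into one of the same kind with
coefficient `-M(-x)`, the symmetric form of the pointwise equation being preserved
(`fwdSol_neg_iff`); here the invertibility of `I + ½ Δ_r` is used. Gluing the two halves gives
`locSol_exists` and `locSol_unique`.
-/

open MeasureTheory Filter Function

/-- A function `u : (a,b) → ℂⁿ` is *balanced* if at every point of `(a,b)` it has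
one-sided limits from the left and from the right and its value is their average. -/
def IsBalancedOn {n : ℕ} (u : ℝ → Fin n → ℂ) (a b : ℝ) : Prop :=
  ∀ x ∈ Set.Ioo a b,
    Tendsto u (nhdsWithin x (Set.Iio x)) (nhds (leftLim u x)) ∧
    Tendsto u (nhdsWithin x (Set.Ioi x)) (nhds (rightLim u x)) ∧
    u x = (leftLim u x + rightLim u x) / 2

/-- A *balanced solution* of `u' = r u + g dν` on `(a,b)` (with `r = M dν`): a balanced
function of locally bounded variation on `(a,b)` with
`u⁻(d) − u⁻(c) = ∫_{[c,d)} (M(t)·u(t) + g(t)) dν(t)` whenever `a < c ≤ d < b`. -/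
def IsBalancedSolution {n : ℕ} (a b : ℝ) (ν : Measure ℝ)
    (M : ℝ → Matrix (Fin n) (Fin n) ℂ) (g : ℝ → Fin n → ℂ) (u : ℝ → Fin n → ℂ) : Prop :=
  LocallyBoundedVariationOn u (Set.Ioo a b) ∧ IsBalancedOn u a b ∧
    ∀ c d : ℝ, a < c → c ≤ d → d < b →
      leftLim u d - leftLim u c = ∫ t in Set.Ico c d, ((M t).mulVec (u t) + g t) ∂ν

/-! ### Iterated integrals over ordered simplices -/

/-- `volterraIter α k x` is the iterated integral `∫ dα(t₁) ⋯ dα(t_k)` over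
`t₁ < t₂ < ⋯ < t_k < x`, with value `1` for `k = 0`. The inequalities are strict, which is what makes
the factorial bound hold in the presence of atoms. -/
noncomputable def volterraIter (α : Measure ℝ) : ℕ → ℝ → ENNReal
  | 0, _ => 1
  | k + 1, x => ∫⁻ t in Set.Iio x, volterraIter α k t ∂α

lemma volterraIter_mono (α : Measure ℝ) (k : ℕ) : Monotone (volterraIter α k) := by
  cases k with
  | zero => intro x y _; simp [volterraIter]
  | succ k => intro x y h; exact lintegral_mono_set (Set.Iio_subset_Iio h)

lemma volterraIter_one (α : Measure ℝ) (x : ℝ) : volterraIter α 1 x = α (Set.Iio x) := by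
  simp [volterraIter]

/-- Exchanging the two outermost integrations: integrating last over the second largest variable
`s`, the largest one ranges over `(s, x)`. -/
lemma volterraIter_swap (α : Measure ℝ) [IsFiniteMeasure α] (k : ℕ) (x : ℝ) :
    volterraIter α (k + 2) x =
      ∫⁻ s in Set.Iio x, volterraIter α k s * α (Set.Ioo s x) ∂α := by
  have hm : Measurable (volterraIter α k) := (volterraIter_mono α k).measurable
  have hS : MeasurableSet {p : ℝ × ℝ | p.1 < p.2} := measurableSet_lt measurable_fst measurable_snd
  have hf : Measurable (uncurry fun t s : ℝ => (Set.Iio t).indicator (volterraIter α k) s) := by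
    have : (uncurry fun t s : ℝ => (Set.Iio t).indicator (volterraIter α k) s) =
        {p : ℝ × ℝ | p.2 < p.1}.indicator (fun p => volterraIter α k p.2) := by
      ext ⟨t, s⟩; simp [uncurry, Set.indicator]
    rw [this]
    exact (hm.comp measurable_snd).indicator (measurableSet_lt measurable_snd measurable_fst)
  calc volterraIter α (k + 2) x
      = ∫⁻ t in Set.Iio x, ∫⁻ s in Set.Iio x, (Set.Iio t).indicator (volterraIter α k) s ∂α ∂α := by
        change ∫⁻ t in Set.Iio x, volterraIter α (k + 1) t ∂α = _
        refine setLIntegral_congr_fun measurableSet_Iio fun t ht => ?_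
        rw [lintegral_indicator measurableSet_Iio, Measure.restrict_restrict measurableSet_Iio,
          Set.inter_eq_left.2 (Set.Iio_subset_Iio (le_of_lt ht))]
        rfl
    _ = ∫⁻ s in Set.Iio x, ∫⁻ t in Set.Iio x, (Set.Iio t).indicator (volterraIter α k) s ∂α ∂α :=
        lintegral_lintegral_swap hf.aemeasurable
    _ = _ := by
        refine lintegral_congr fun s => ?_
        have : (fun t : ℝ => (Set.Iio t).indicator (volterraIter α k) s) =
            (Set.Ioi s).indicator fun _ => volterraIter α k s := by
          ext t; simp [Set.indicator]
        rw [this, lintegral_indicator measurableSet_Ioi, lintegral_const,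
          Measure.restrict_restrict measurableSet_Ioi, Set.Ioi_inter_Iio]
        simp

/-- The recursive form of the factorial bound. In the induction step, one of the `k + 2` copies of
the `(k + 2)`-fold integral is rewritten with `volterraIter_swap`, so that it supplies the mass of
`(s, x)` missing from the mass of `(-∞, s)` provided by the induction hypothesis. -/
lemma volterraIter_succ_le (α : Measure ℝ) [IsFiniteMeasure α] (k : ℕ) (x : ℝ) :
    (k + 1) * volterraIter α (k + 1) x ≤ volterraIter α k x * volterraIter α 1 x := by
  induction k generalizing x with
  | zero => simp [volterraIter]
  | succ k ih =>
    have hm : ∀ j, Measurable (volterraIter α j) := fun j => (volterraIter_mono α j).measurable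
    calc ((k + 1 : ℕ) + 1 : ENNReal) * volterraIter α (k + 1 + 1) x
        = (k + 1) * ∫⁻ s in Set.Iio x, volterraIter α (k + 1) s ∂α + volterraIter α (k + 2) x := by
          push_cast
          rw [add_mul _ (1 : ENNReal), one_mul]; rfl
      _ = ∫⁻ s in Set.Iio x, ((k + 1) * volterraIter α (k + 1) s +
            volterraIter α k s * α (Set.Ioo s x)) ∂α := by
          rw [volterraIter_swap, lintegral_add_left ((hm _).const_mul _), lintegral_const_mul _ (hm _)]
      _ ≤ ∫⁻ s in Set.Iio x, volterraIter α k s * volterraIter α 1 x ∂α := by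
          refine setLIntegral_mono ((hm _).mul_const _) fun s hs => ?_
          calc _ ≤ volterraIter α k s * volterraIter α 1 s +
                volterraIter α k s * α (Set.Ioo s x) := add_le_add (ih s) le_rfl
            _ = volterraIter α k s * (α (Set.Iio s) + α (Set.Ioo s x)) := by
              rw [volterraIter_one, mul_add]
            _ ≤ _ := by
              rw [volterraIter_one, ← measure_union _ measurableSet_Ioo]
              · gcongr
                rintro t (ht | ht)
                · exact lt_trans (Set.mem_Iio.1 ht) hs
                · exact ht.2
              · exact Set.disjoint_left.2 fun t h1 h2 => lt_asymm h1 h2.1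
      _ = _ := by rw [lintegral_mul_const _ (hm _)]; rfl

lemma volterraIter_le (α : Measure ℝ) [IsFiniteMeasure α] (k : ℕ) (x : ℝ) :
    volterraIter α k x ≤ ENNReal.ofReal ((α Set.univ).toReal ^ k / k.factorial) := by
  have key : (k.factorial : ENNReal) * volterraIter α k x ≤ α Set.univ ^ k := by
    induction k with
    | zero => simp [volterraIter]
    | succ k ih =>
      calc ((k + 1).factorial : ENNReal) * volterraIter α (k + 1) x
          = k.factorial * ((k + 1) * volterraIter α (k + 1) x) := by
            rw [Nat.factorial_succ]; push_cast; ring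
        _ ≤ k.factorial * (volterraIter α k x * volterraIter α 1 x) := by
            exact mul_le_mul' le_rfl (volterraIter_succ_le α k x)
        _ = (k.factorial * volterraIter α k x) * volterraIter α 1 x := by ring
        _ ≤ α Set.univ ^ k * α Set.univ := by
            gcongr
            rw [volterraIter_one]; exact measure_mono (Set.subset_univ _)
        _ = _ := by rw [pow_succ]
  rw [ENNReal.ofReal_div_of_pos (by positivity), ENNReal.ofReal_pow (by positivity),
    ENNReal.ofReal_toReal (measure_ne_top _ _), ENNReal.ofReal_natCast,
    ENNReal.le_div_iff_mul_le (Or.inl (by positivity)) (Or.inl (ENNReal.natCast_ne_top _)), mul_comm]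
  exact key

/-! ### Volterra equations with respect to a finite measure -/

section Volterra

variable {E : Type*} [NormedAddCommGroup E] [NormedSpace ℝ E]

lemma integrable_clm_apply {μ : Measure ℝ} {A : ℝ → E →L[ℝ] E} (hA : Integrable A μ)
    {y : ℝ → E} (hy : AEStronglyMeasurable y μ) {K : ℝ} (hK : ∀ᵐ t ∂μ, ‖y t‖ ≤ K) :
    Integrable (fun t => A t (y t)) μ := by
  refine Integrable.mono' (hA.norm.mul_const K)
    (isBoundedBilinearMap_apply.continuous.comp_aestronglyMeasurable
      (hA.aestronglyMeasurable.prodMk hy)) ?_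
  filter_upwards [hK] with t ht
  exact (ContinuousLinearMap.le_opNorm _ _).trans (by gcongr)

lemma stronglyMeasurable_integral_Iio {μ : Measure ℝ} [IsFiniteMeasure μ] {f : ℝ → E}
    (hf : AEStronglyMeasurable f μ) :
    StronglyMeasurable fun x => ∫ t in Set.Iio x, f t ∂μ := by
  have h1 : (fun x => ∫ t in Set.Iio x, f t ∂μ) =
      fun x => ∫ t, {p : ℝ × ℝ | p.2 < p.1}.indicator (fun p => hf.mk f p.2) (x, t) ∂μ := by
    ext x
    rw [← integral_indicator measurableSet_Iio]
    refine integral_congr_ae ?_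
    filter_upwards [hf.ae_eq_mk] with t ht
    simp [Set.indicator, ht]
  rw [h1]
  exact StronglyMeasurable.integral_prod_right'
    ((hf.stronglyMeasurable_mk.comp_measurable measurable_snd).indicator
      (measurableSet_lt measurable_snd measurable_fst))

/-- The iterated integrals of the measure `‖A‖ dμ` reproduce themselves under the scalar Volterra
operator with kernel `‖A‖`. -/
lemma lintegral_volterraIter {μ : Measure ℝ} {A : ℝ → E →L[ℝ] E} (hA : Integrable A μ)
    (k : ℕ) (x : ℝ) :
    ∫⁻ t in Set.Iio x, ‖A t‖ₑ * volterraIter (μ.withDensity fun t => ‖A t‖ₑ) k t ∂μ =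
      volterraIter (μ.withDensity fun t => ‖A t‖ₑ) (k + 1) x := by
  change _ = ∫⁻ t in Set.Iio x, _ ∂_
  rw [restrict_withDensity measurableSet_Iio, lintegral_withDensity_eq_lintegral_mul₀
    hA.aestronglyMeasurable.enorm.restrict (volterraIter_mono _ k).measurable.aemeasurable]
  rfl

lemma isFiniteMeasure_density {μ : Measure ℝ} {A : ℝ → E →L[ℝ] E} (hA : Integrable A μ) :
    IsFiniteMeasure (μ.withDensity fun t => ‖A t‖ₑ) :=
  isFiniteMeasure_withDensity hA.hasFiniteIntegral.ne

/-- A bounded `φ ≥ 0` with `φ(x) ≤ ∫_{t<x} ‖A(t)‖ φ(t) dμ(t)` vanishes, since iterating the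
inequality gives `φ ≤ C T ^ k / k!` for all `k`. No measurability of `φ` is needed for the lower
Lebesgue integral. -/
lemma volterra_gronwall {μ : Measure ℝ} {A : ℝ → E →L[ℝ] E} (hA : Integrable A μ)
    {φ : ℝ → ENNReal} {C : ENNReal} (hC : C ≠ ⊤) (hφC : ∀ x, φ x ≤ C)
    (hφ : ∀ x, φ x ≤ ∫⁻ t in Set.Iio x, ‖A t‖ₑ * φ t ∂μ) (x : ℝ) : φ x = 0 := by
  have := isFiniteMeasure_density hA
  set α := μ.withDensity fun t => ‖A t‖ₑ with hα
  have hb : ∀ k x, φ x ≤ C * volterraIter α k x := by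
    intro k
    induction k with
    | zero => intro x; simpa [volterraIter] using hφC x
    | succ k ih =>
      intro x
      calc φ x ≤ ∫⁻ t in Set.Iio x, ‖A t‖ₑ * φ t ∂μ := hφ x
        _ ≤ ∫⁻ t in Set.Iio x, C * (‖A t‖ₑ * volterraIter α k t) ∂μ := by
          refine lintegral_mono fun t => ?_
          calc ‖A t‖ₑ * φ t ≤ ‖A t‖ₑ * (C * volterraIter α k t) := mul_le_mul' le_rfl (ih t)
            _ = _ := by ring
        _ = C * volterraIter α (k + 1) x := by
          rw [lintegral_const_mul' _ _ hC, lintegral_volterraIter hA]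
  have hlim : Tendsto (fun k : ℕ => C * ENNReal.ofReal ((α Set.univ).toReal ^ k / k.factorial))
      atTop (nhds 0) := by
    have h := ENNReal.Tendsto.const_mul (a := C) (ENNReal.tendsto_ofReal
      (FloorSemiring.tendsto_pow_div_factorial_atTop (α Set.univ).toReal)) (Or.inr hC)
    simpa using h
  exact le_antisymm (ge_of_tendsto' hlim fun k => (hb k x).trans
    (mul_le_mul' le_rfl (volterraIter_le α k x))) zero_le

/-- The `k`-th term of the Picard series of `y(x) = c(x) + ∫_{t<x} A(t) y(t) dμ(t)`, that is, the
Volterra operator applied `k` times to `c`. -/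
noncomputable def picardTerm (μ : Measure ℝ) (A : ℝ → E →L[ℝ] E) (c : ℝ → E) : ℕ → ℝ → E
  | 0, x => c x
  | k + 1, x => ∫ t in Set.Iio x, A t (picardTerm μ A c k t) ∂μ

variable [CompleteSpace E]

/-- Existence of a bounded measurable solution of the Volterra equation, as the sum of the Picard
series, which is dominated uniformly in `x` by `∑ C T ^ k / k!`. -/
lemma volterra_exists {μ : Measure ℝ} [IsFiniteMeasure μ] {A : ℝ → E →L[ℝ] E}
    (hA : Integrable A μ) {c : ℝ → E} (hc : StronglyMeasurable c) {C : ℝ} (hC : ∀ x, ‖c x‖ ≤ C) :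
    ∃ y : ℝ → E, StronglyMeasurable y ∧ (∃ K, ∀ x, ‖y x‖ ≤ K) ∧
      ∀ x, y x = c x + ∫ t in Set.Iio x, A t (y t) ∂μ := by
  have := isFiniteMeasure_density hA
  set α := μ.withDensity fun t => ‖A t‖ₑ with hα
  set e := picardTerm μ A c with he
  have hC0 : 0 ≤ C := (norm_nonneg _).trans (hC 0)
  have hb : ∀ k x, ‖e k x‖ₑ ≤ ENNReal.ofReal C * volterraIter α k x := by
    intro k
    induction k with
    | zero =>
      intro x
      simpa [volterraIter, he, picardTerm, ← ofReal_norm] using ENNReal.ofReal_le_ofReal (hC x)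
    | succ k ih =>
      intro x
      calc ‖e (k + 1) x‖ₑ ≤ ∫⁻ t in Set.Iio x, ‖A t (e k t)‖ₑ ∂μ :=
            enorm_integral_le_lintegral_enorm _
        _ ≤ ∫⁻ t in Set.Iio x, ENNReal.ofReal C * (‖A t‖ₑ * volterraIter α k t) ∂μ := by
          refine lintegral_mono fun t => ?_
          calc ‖A t (e k t)‖ₑ ≤ ‖A t‖ₑ * ‖e k t‖ₑ := ContinuousLinearMap.le_opENorm _ _
            _ ≤ ‖A t‖ₑ * (ENNReal.ofReal C * volterraIter α k t) := mul_le_mul' le_rfl (ih t)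
            _ = _ := by ring
        _ = _ := by
          rw [lintegral_const_mul' _ _ ENNReal.ofReal_ne_top, lintegral_volterraIter hA]
  set B : ℕ → ℝ := fun k => C * ((α Set.univ).toReal ^ k / k.factorial) with hB
  have hB0 : ∀ k, 0 ≤ B k := fun k => by positivity
  have hBs : Summable B := (Real.summable_pow_div_factorial _).mul_left C
  -- The bound by `volterraIter` is the one that can be iterated; the factorial bound follows from it.
  have hbB : ∀ k x, ‖e k x‖ ≤ B k := by
    intro k x
    have h := (hb k x).trans (mul_le_mul' le_rfl (volterraIter_le α k x))
    rw [← ENNReal.ofReal_mul hC0, ← ofReal_norm] at h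
    exact (ENNReal.ofReal_le_ofReal_iff (hB0 k)).1 h
  have hem : ∀ k, StronglyMeasurable (e k) := by
    intro k
    induction k with
    | zero => exact hc
    | succ k ih =>
      exact stronglyMeasurable_integral_Iio (integrable_clm_apply hA ih.aestronglyMeasurable
        (Eventually.of_forall (hbB k))).aestronglyMeasurable
  have hsum : ∀ x, Summable fun k => e k x := fun x =>
    Summable.of_norm_bounded hBs fun k => hbB k x
  have hint : ∀ k, Integrable (fun t => A t (e k t)) μ := fun k =>
    integrable_clm_apply hA (hem k).aestronglyMeasurable (Eventually.of_forall (hbB k))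
  refine ⟨fun x => ∑' k, e k x, ?_, ⟨∑' k, B k, fun x =>
    tsum_of_norm_bounded hBs.hasSum fun k => hbB k x⟩, fun x => ?_⟩
  · refine stronglyMeasurable_of_tendsto atTop
      (f := fun N x => ∑ k ∈ Finset.range N, e k x) (fun N => ?_)
      (tendsto_pi_nhds.2 fun x => (hsum x).hasSum.tendsto_sum_nat)
    exact Finset.stronglyMeasurable_fun_sum _ fun k _ => hem k
  · beta_reduce
    rw [(hsum x).tsum_eq_zero_add]
    congr 1
    have hs : Summable fun k => ∫ t in Set.Iio x, ‖A t (e k t)‖ ∂μ := by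
      refine Summable.of_nonneg_of_le (fun k => integral_nonneg fun t => norm_nonneg _)
        (fun k => ?_) (hBs.mul_left (∫ t in Set.Iio x, ‖A t‖ ∂μ))
      rw [← integral_mul_const]
      refine integral_mono (hint k).norm.restrict (hA.norm.mul_const _).restrict fun t => ?_
      exact (ContinuousLinearMap.le_opNorm _ _).trans
        (mul_le_mul_of_nonneg_left (hbB k t) (norm_nonneg _))
    have h := (hasSum_integral_of_summable_integral_norm (μ := μ.restrict (Set.Iio x))
      (F := fun k t => A t (e k t)) (fun k => (hint k).restrict) hs).tsum_eq
    refine Eq.trans ?_ (h.trans (integral_congr_ae (Eventually.of_forall fun t => ?_)))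
    · rfl
    · exact ((A t).map_tsum (hsum t)).symm

end Volterra

/-! ### Eliminating the value at an atom -/

section Resolvent

variable {E : Type*} [NormedAddCommGroup E] [NormedSpace ℝ E]

/-- The inverse of `1 - ½ μ{x} M(x)`, with the value `0` where this operator is not invertible. -/
noncomputable def jumpResolvent (μ : Measure ℝ) (M : ℝ → E →L[ℝ] E) (x : ℝ) : E →L[ℝ] E :=
  Ring.inverse (1 - (μ.real {x} / 2) • M x)

lemma countable_atoms (μ : Measure ℝ) [IsFiniteMeasure μ] : {x | μ.real {x} ≠ 0}.Countable := by
  have h := Measure.countable_meas_pos_of_disjoint_iUnion (μ := μ) (As := fun x : ℝ => {x})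
    (fun x => measurableSet_singleton x) (fun x y hxy => Set.disjoint_singleton.2 hxy)
  refine h.mono fun x hx => ?_
  exact pos_iff_ne_zero.2 fun (h0 : μ {x} = 0) => hx (by simp [measureReal_def, h0])

lemma norm_atom_smul_le {F : Type*} [NormedAddCommGroup F] [NormedSpace ℝ F] [CompleteSpace F]
    {μ : Measure ℝ} {g : ℝ → F} (hg : Integrable g μ) (x : ℝ) :
    ‖μ.real {x} • g x‖ ≤ ∫ t, ‖g t‖ ∂μ := by
  rw [← integral_singleton]
  exact (norm_integral_le_integral_norm _).trans
    (setIntegral_le_integral hg.norm (Eventually.of_forall fun _ => norm_nonneg _))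

/-- A function that is constant off a countable set is strongly measurable: it is Borel measurable
and has countable range. -/
lemma stronglyMeasurable_of_countable_ne {F : Type*} [NormedAddCommGroup F] {f : ℝ → F} {c : F}
    (h : {x | f x ≠ c}.Countable) : StronglyMeasurable f := by
  borelize F
  refine stronglyMeasurable_iff_measurable_separable.2
    ⟨(measurable_const (a := c)).measurable_of_countable_ne (h.mono fun _ hx => Ne.symm hx), ?_⟩
  have hr : Set.range f ⊆ insert c (f '' {x | f x ≠ c}) := by
    rintro _ ⟨x, rfl⟩
    by_cases hx : f x = c
    · exact Or.inl hx
    · exact Or.inr ⟨x, hx, rfl⟩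
  exact (((h.image f).insert c).mono hr).isSeparable

lemma stronglyMeasurable_jumpResolvent (μ : Measure ℝ) [IsFiniteMeasure μ] (M : ℝ → E →L[ℝ] E) :
    StronglyMeasurable (jumpResolvent μ M) :=
  stronglyMeasurable_of_countable_ne (c := 1)
    ((countable_atoms μ).mono fun x hx (h0 : μ.real {x} = 0) => hx (by simp [jumpResolvent, h0]))

/-- The resolvent is bounded: only finitely many atoms have `‖μ{x} M(x)‖ ≥ 1`, and at every other
point its norm is at most `2` by the Neumann estimate. -/
lemma exists_bound_jumpResolvent {μ : Measure ℝ} [IsFiniteMeasure μ] {M : ℝ → E →L[ℝ] E}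
    (hM : Integrable M μ) : ∃ K, ∀ x, ‖jumpResolvent μ M x‖ ≤ K := by
  have := isFiniteMeasure_density hM
  have hfin := Measure.finite_const_le_meas_of_disjoint_iUnion
    (μ.withDensity fun t => ‖M t‖ₑ) zero_lt_one (As := fun x : ℝ => {x})
    (fun x => measurableSet_singleton x) (fun x y hxy => Set.disjoint_singleton.2 hxy)
    (measure_ne_top _ _)
  obtain ⟨K, hK⟩ := (hfin.image fun x => ‖jumpResolvent μ M x‖).bddAbove
  refine ⟨max K 2, fun x => ?_⟩
  by_cases hx : 1 ≤ (μ.withDensity fun t => ‖M t‖ₑ) {x}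
  · exact le_max_of_le_left (hK ⟨x, hx, rfl⟩)
  refine le_max_of_le_right ?_
  rw [withDensity_apply _ (measurableSet_singleton x), lintegral_singleton, not_le] at hx
  set T : E →L[ℝ] E := (μ.real {x} / 2) • M x with hT
  have hTn : ‖T‖ ≤ 1 / 2 := by
    have h1 : ‖μ.real {x} • M x‖ₑ < 1 := by
      rw [enorm_smul, mul_comm]
      refine lt_of_le_of_lt (le_of_eq ?_) hx
      rw [Real.enorm_eq_ofReal measureReal_nonneg, ofReal_measureReal]
    have h2 : ‖μ.real {x} • M x‖ < 1 := by
      rw [← ofReal_norm, ← ENNReal.ofReal_one] at h1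
      exact (ENNReal.ofReal_lt_ofReal_iff one_pos).1 h1
    have h3 : T = (1 / 2 : ℝ) • (μ.real {x} • M x) := by rw [hT, smul_smul]; congr 1; ring
    rw [h3, norm_smul, Real.norm_of_nonneg (by norm_num)]
    linarith
  -- From `R = 1 + T R` and `‖T‖ ≤ ½` follows `‖R‖ ≤ 2`.
  by_cases hu : IsUnit (1 - T)
  · have h1 : (1 - T) * jumpResolvent μ M x = 1 := Ring.mul_inverse_cancel _ hu
    have h2 : jumpResolvent μ M x = 1 + T * jumpResolvent μ M x := by
      rw [sub_mul, one_mul] at h1; rw [← h1]; abel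
    have h3 : ‖jumpResolvent μ M x‖ ≤ 1 + 1 / 2 * ‖jumpResolvent μ M x‖ := by
      calc ‖jumpResolvent μ M x‖ = ‖1 + T * jumpResolvent μ M x‖ := by rw [← h2]
        _ ≤ ‖(1 : E →L[ℝ] E)‖ + ‖T * jumpResolvent μ M x‖ := norm_add_le _ _
        _ ≤ 1 + ‖T‖ * ‖jumpResolvent μ M x‖ :=
          add_le_add ContinuousLinearMap.norm_id_le (norm_mul_le _ _)
        _ ≤ _ := by gcongr
    linarith
  · have : jumpResolvent μ M x = 0 := Ring.inverse_non_unit _ hu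
    rw [this, norm_zero]; norm_num

lemma integrable_mul_jumpResolvent {μ : Measure ℝ} [IsFiniteMeasure μ] {M : ℝ → E →L[ℝ] E}
    (hM : Integrable M μ) : Integrable (fun t => M t * jumpResolvent μ M t) μ := by
  obtain ⟨K, hK⟩ := exists_bound_jumpResolvent hM
  refine Integrable.mono' (hM.norm.mul_const K) (hM.aestronglyMeasurable.mul
    (stronglyMeasurable_jumpResolvent μ M).aestronglyMeasurable) (Eventually.of_forall fun t => ?_)
  exact (norm_mul_le _ _).trans (by gcongr; exact hK t)

/-- The implicit equation for the value `v` at an atom, in terms of the data `z` accumulated to its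
left, is solved by the resolvent. -/
lemma jumpResolvent_eq_iff {μ : Measure ℝ} {M : ℝ → E →L[ℝ] E} {x : ℝ}
    (hU : IsUnit (1 - (μ.real {x} / 2) • M x)) (v z : E) :
    v = jumpResolvent μ M x z ↔ v = z + (μ.real {x} / 2) • M x v := by
  have h1 : ∀ w, (1 - (μ.real {x} / 2) • M x) (jumpResolvent μ M x w) = w := fun w =>
    congrArg (fun L : E →L[ℝ] E => L w) (Ring.mul_inverse_cancel _ hU)
  have h2 : ∀ w, jumpResolvent μ M x ((1 - (μ.real {x} / 2) • M x) w) = w := fun w =>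
    congrArg (fun L : E →L[ℝ] E => L w) (Ring.inverse_mul_cancel _ hU)
  constructor
  · rintro rfl
    have := h1 z
    simp only [sub_apply, one_apply_eq_self, smul_apply] at this
    exact sub_eq_iff_eq_add.1 this
  · intro h
    rw [← h2 v]
    congr 1
    simp only [sub_apply, one_apply_eq_self, smul_apply]
    exact sub_eq_iff_eq_add.2 h

/-- Uniqueness for the implicit equation. It is required on a set `S` carrying `μ` only, so that it
applies to the restriction of a measure to a compact interval. -/
lemma jump_unique {μ : Measure ℝ} [IsFiniteMeasure μ] {M : ℝ → E →L[ℝ] E} (hM : Integrable M μ)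
    {S : Set ℝ} (hS : ∀ᵐ t ∂μ, t ∈ S) (hU : ∀ x, IsUnit (1 - (μ.real {x} / 2) • M x))
    {w : ℝ → E} (hw : Integrable (fun t => M t (w t)) μ)
    (hw' : ∀ x ∈ S, w x = ∫ t in Set.Iio x, M t (w t) ∂μ + (μ.real {x} / 2) • M x (w x)) :
    ∀ x ∈ S, w x = 0 := by
  set z : ℝ → E := fun x => ∫ t in Set.Iio x, M t (w t) ∂μ with hz
  have hwz : ∀ x ∈ S, w x = jumpResolvent μ M x (z x) := fun x hx =>
    (jumpResolvent_eq_iff (hU x) _ _).2 (hw' x hx)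
  have hz0 : ∀ x, ‖z x‖ₑ = 0 := by
    refine volterra_gronwall (integrable_mul_jumpResolvent hM)
      (C := ∫⁻ t, ‖M t (w t)‖ₑ ∂μ) hw.hasFiniteIntegral.ne (fun x => ?_) fun x => ?_
    · exact (enorm_integral_le_lintegral_enorm _).trans (setLIntegral_le_lintegral _ _)
    · refine (enorm_integral_le_lintegral_enorm _).trans (lintegral_mono_ae ?_)
      filter_upwards [ae_restrict_of_ae hS] with t ht
      rw [hwz t ht]
      exact ContinuousLinearMap.le_opENorm (M t * jumpResolvent μ M t) (z t)
  intro x hx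
  rw [hwz x hx, enorm_eq_zero.1 (hz0 x), map_zero]

variable [CompleteSpace E]

/-- Existence for the implicit equation: with `y` a solution of the Volterra equation with kernel
`M (1 - ½ Δ)⁻¹`, the function `v = (1 - ½ Δ)⁻¹ (y + ½ μ{·} g)` is a solution. -/
lemma jump_exists {μ : Measure ℝ} [IsFiniteMeasure μ] {M : ℝ → E →L[ℝ] E} (hM : Integrable M μ)
    {g : ℝ → E} (hg : Integrable g μ) (hU : ∀ x, IsUnit (1 - (μ.real {x} / 2) • M x)) (p : E) :
    ∃ v : ℝ → E, Integrable (fun t => M t (v t) + g t) μ ∧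
      ∀ x, v x = p + ∫ t in Set.Iio x, (M t (v t) + g t) ∂μ +
        (μ.real {x} / 2) • (M x (v x) + g x) := by
  set k : ℝ → E := fun x => (μ.real {x} / 2) • g x with hk
  have hA := integrable_mul_jumpResolvent hM
  set A : ℝ → E →L[ℝ] E := fun t => M t * jumpResolvent μ M t with hAdef
  have hkm : StronglyMeasurable k :=
    stronglyMeasurable_of_countable_ne (c := 0)
      ((countable_atoms μ).mono fun x hx (h0 : μ.real {x} = 0) => hx (by simp [hk, h0]))
  have hkb : ∀ x, ‖k x‖ ≤ ∫ t, ‖g t‖ ∂μ := by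
    intro x
    have h1 : k x = (1 / 2 : ℝ) • (μ.real {x} • g x) := by
      simp only [hk, smul_smul]; congr 1; ring
    have h2 := norm_atom_smul_le hg x
    rw [h1, norm_smul, Real.norm_of_nonneg (by norm_num)]
    linarith [norm_nonneg (μ.real {x} • g x)]
  have hh : Integrable (fun t => A t (k t) + g t) μ :=
    (integrable_clm_apply hA hkm.aestronglyMeasurable (Eventually.of_forall hkb)).add hg
  obtain ⟨y, hym, ⟨K, hK⟩, hy⟩ := volterra_exists hA
    (c := fun x => p + ∫ t in Set.Iio x, (A t (k t) + g t) ∂μ)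
    (stronglyMeasurable_const.add (stronglyMeasurable_integral_Iio hh.aestronglyMeasurable))
    (C := ‖p‖ + ∫ t, ‖A t (k t) + g t‖ ∂μ)
    (fun x => (norm_add_le _ _).trans (by
      gcongr
      exact (norm_integral_le_integral_norm _).trans
        (setIntegral_le_integral hh.norm (Eventually.of_forall fun _ => norm_nonneg _))))
  have hAy : Integrable (fun t => A t (y t)) μ :=
    integrable_clm_apply hA hym.aestronglyMeasurable (Eventually.of_forall hK)
  have hf : (fun t => M t (jumpResolvent μ M t (y t + k t)) + g t) =
      fun t => A t (y t) + (A t (k t) + g t) := by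
    ext t
    simp [hAdef, add_assoc]
  refine ⟨fun x => jumpResolvent μ M x (y x + k x), ?_, fun x => ?_⟩
  · rw [hf]; exact hAy.add hh
  · have h1 : y x = p + ∫ t in Set.Iio x, (M t (jumpResolvent μ M t (y t + k t)) + g t) ∂μ := by
      rw [hf, integral_add hAy.restrict hh.restrict, hy x]
      abel
    rw [← h1]
    refine ((jumpResolvent_eq_iff (hU x) _ _).1 rfl).trans ?_
    rw [smul_add]
    simp only [hk]
    abel

end Resolvent

/-! ### The symmetric integral and solutions to one side of a point -/

section Balanced

variable {E : Type*} [NormedAddCommGroup E] [NormedSpace ℝ E]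

/-- The integral of `f dν` over the interval from `c` to `d`, each endpoint counted with weight `½`.
This is the increment from `c` to `d` of a balanced primitive of `f dν`. -/
noncomputable def balInt (ν : Measure ℝ) (f : ℝ → E) (c d : ℝ) : E :=
  (1 / 2 : ℝ) • (∫ t in Set.Ico c d, f t ∂ν + ∫ t in Set.Ioc c d, f t ∂ν)

lemma balInt_self (ν : Measure ℝ) (f : ℝ → E) (c : ℝ) : balInt ν f c c = 0 := by
  simp [balInt]

lemma balInt_congr {ν : Measure ℝ} {f g : ℝ → E} {c d : ℝ} (h : Set.EqOn f g (Set.Icc c d)) :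
    balInt ν f c d = balInt ν g c d := by
  unfold balInt
  rw [setIntegral_congr_fun measurableSet_Ico (h.mono Set.Ico_subset_Icc_self),
    setIntegral_congr_fun measurableSet_Ioc (h.mono Set.Ioc_subset_Icc_self)]

lemma balInt_add {ν : Measure ℝ} {f : ℝ → E} {c d e : ℝ} (hcd : c ≤ d) (hde : d ≤ e)
    (hf : IntegrableOn f (Set.Icc c e) ν) :
    balInt ν f c d + balInt ν f d e = balInt ν f c e := by
  have h1 : ∫ t in Set.Ico c e, f t ∂ν = ∫ t in Set.Ico c d, f t ∂ν + ∫ t in Set.Ico d e, f t ∂ν := by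
    rw [← Set.Ico_union_Ico_eq_Ico hcd hde]
    exact setIntegral_union (Set.disjoint_left.2 fun t h1 h2 => not_lt.2 h2.1 h1.2)
      measurableSet_Ico
      (hf.mono_set fun t ht => ⟨ht.1, ht.2.le.trans hde⟩)
      (hf.mono_set fun t ht => ⟨hcd.trans ht.1, ht.2.le⟩)
  have h2 : ∫ t in Set.Ioc c e, f t ∂ν = ∫ t in Set.Ioc c d, f t ∂ν + ∫ t in Set.Ioc d e, f t ∂ν := by
    rw [← Set.Ioc_union_Ioc_eq_Ioc hcd hde]
    exact setIntegral_union (Set.disjoint_left.2 fun t h1 h2 => not_lt.2 h1.2 h2.1)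
      measurableSet_Ioc
      (hf.mono_set fun t ht => ⟨ht.1.le, ht.2.trans hde⟩)
      (hf.mono_set fun t ht => ⟨hcd.trans ht.1.le, ht.2⟩)
  unfold balInt
  rw [h1, h2, ← smul_add]
  congr 1
  abel

lemma integral_Ioc_eq [CompleteSpace E] {ν : Measure ℝ} {f : ℝ → E} {c d : ℝ} (hcd : c ≤ d)
    (hf : IntegrableOn f (Set.Icc c d) ν) :
    ∫ t in Set.Ioc c d, f t ∂ν =
      ∫ t in Set.Ico c d, f t ∂ν + ν.real {d} • f d - ν.real {c} • f c := by
  have h1 : ∫ t in Set.Icc c d, f t ∂ν = ∫ t in Set.Ico c d, f t ∂ν + ν.real {d} • f d := by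
    rw [← Set.Ico_union_right hcd, setIntegral_union (by simp) (measurableSet_singleton _)
      (hf.mono_set Set.Ico_subset_Icc_self) (hf.mono_set (by simp [hcd])), integral_singleton]
  have h2 : ∫ t in Set.Icc c d, f t ∂ν = ν.real {c} • f c + ∫ t in Set.Ioc c d, f t ∂ν := by
    rw [← Set.Ioc_union_left hcd, setIntegral_union (by simp) (measurableSet_singleton _)
      (hf.mono_set Set.Ioc_subset_Icc_self) (hf.mono_set (by simp [hcd])), integral_singleton,
      add_comm]
  rw [← h1, h2]; abel

lemma balInt_eq [CompleteSpace E] {ν : Measure ℝ} {f : ℝ → E} {c d : ℝ} (hcd : c ≤ d)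
    (hf : IntegrableOn f (Set.Icc c d) ν) :
    balInt ν f c d =
      ∫ t in Set.Ico c d, f t ∂ν + (ν.real {d} / 2) • f d - (ν.real {c} / 2) • f c := by
  rw [balInt, integral_Ioc_eq hcd hf]
  module

/-- The pointwise integral equation on `[x₀, D]` with initial value `u₀` at `x₀`, together with the
integrability of its integrand. -/
def FwdSol (ν : Measure ℝ) (M : ℝ → E →L[ℝ] E) (g : ℝ → E) (x₀ : ℝ) (u₀ : E) (D : ℝ)
    (v : ℝ → E) : Prop :=
  IntegrableOn (fun t => M t (v t) + g t) (Set.Icc x₀ D) ν ∧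
    ∀ x ∈ Set.Icc x₀ D, v x = u₀ + balInt ν (fun t => M t (v t) + g t) x₀ x

lemma FwdSol.mono {ν : Measure ℝ} {M : ℝ → E →L[ℝ] E} {g : ℝ → E} {x₀ : ℝ} {u₀ : E} {D D' : ℝ}
    {v : ℝ → E} (h : FwdSol ν M g x₀ u₀ D v) (hD : D' ≤ D) : FwdSol ν M g x₀ u₀ D' v :=
  ⟨h.1.mono_set (Set.Icc_subset_Icc_right hD), fun x hx => h.2 x ⟨hx.1, hx.2.trans hD⟩⟩

lemma restrict_real_singleton (ν : Measure ℝ) {S : Set ℝ} {x : ℝ} (hx : x ∈ S) :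
    (ν.restrict S).real {x} = ν.real {x} := by
  simp only [measureReal_def]
  rw [Measure.restrict_apply (measurableSet_singleton x),
    Set.inter_eq_left.2 (Set.singleton_subset_iff.2 hx)]

/-- Restricting `ν` to `[x₀, D]` turns integrals over `(-∞, x)` into integrals over `[x₀, x)`, which
reduces the problem on a compact interval to a finite measure on the line. -/
lemma restrict_restrict_Iio (ν : Measure ℝ) {x₀ D x : ℝ} (hx : x ∈ Set.Icc x₀ D) :
    (ν.restrict (Set.Icc x₀ D)).restrict (Set.Iio x) = ν.restrict (Set.Ico x₀ x) := by
  rw [Measure.restrict_restrict measurableSet_Iio]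
  congr 1
  ext t
  exact ⟨fun h => ⟨h.2.1, h.1⟩, fun h => ⟨h.2, h.1, h.2.le.trans hx.2⟩⟩

lemma isUnit_restrict {ν : Measure ℝ} {M : ℝ → E →L[ℝ] E} {x₀ D : ℝ}
    (hU : ∀ x ∈ Set.Icc x₀ D, IsUnit (1 - (ν.real {x} / 2) • M x)) (x : ℝ) :
    IsUnit (1 - ((ν.restrict (Set.Icc x₀ D)).real {x} / 2) • M x) := by
  by_cases hx : x ∈ Set.Icc x₀ D
  · rw [restrict_real_singleton ν hx]; exact hU x hx
  · have : (ν.restrict (Set.Icc x₀ D)).real {x} = 0 := by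
      rw [measureReal_def, Measure.restrict_apply (measurableSet_singleton x),
        Set.singleton_inter_eq_empty.2 hx]
      simp
    simp [this]

lemma fwdSol_unique [CompleteSpace E] {ν : Measure ℝ} {M : ℝ → E →L[ℝ] E} {g : ℝ → E} {x₀ D : ℝ} {u₀ : E}
    (hν : ν (Set.Icc x₀ D) < ⊤) (hM : IntegrableOn M (Set.Icc x₀ D) ν)
    (hU : ∀ x ∈ Set.Icc x₀ D, IsUnit (1 - (ν.real {x} / 2) • M x))
    {v₁ v₂ : ℝ → E} (h₁ : FwdSol ν M g x₀ u₀ D v₁) (h₂ : FwdSol ν M g x₀ u₀ D v₂) :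
    Set.EqOn v₁ v₂ (Set.Icc x₀ D) := by
  have : IsFiniteMeasure (ν.restrict (Set.Icc x₀ D)) := ⟨by simpa using hν⟩
  set w : ℝ → E := fun t => v₁ t - v₂ t with hw
  have hf : (fun t => M t (w t)) = fun t => (M t (v₁ t) + g t) - (M t (v₂ t) + g t) := by
    ext t; simp [hw]
  have hwi : IntegrableOn (fun t => M t (w t)) (Set.Icc x₀ D) ν := by
    rw [hf]; exact h₁.1.sub h₂.1
  have key := jump_unique hM (ae_restrict_mem measurableSet_Icc) (isUnit_restrict hU) (w := w) hwi
    (fun x hx => by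
      have hx0 : x₀ ∈ Set.Icc x₀ D := ⟨le_rfl, hx.1.trans hx.2⟩
      have hw0 : w x₀ = 0 := by
        simp only [hw]
        rw [h₁.2 x₀ hx0, h₂.2 x₀ hx0, balInt_self, balInt_self, sub_self]
      have hs : Set.Icc x₀ x ⊆ Set.Icc x₀ D := Set.Icc_subset_Icc_right hx.2
      have hs' : Set.Ico x₀ x ⊆ Set.Icc x₀ D := Set.Ico_subset_Icc_self.trans hs
      rw [restrict_restrict_Iio ν hx, restrict_real_singleton ν hx]
      have hwx : w x = balInt ν (fun t => M t (w t)) x₀ x := by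
        rw [hf]
        simp only [hw]
        rw [h₁.2 x hx, h₂.2 x hx, balInt, balInt, balInt,
          integral_sub (h₁.1.mono_set hs') (h₂.1.mono_set hs'),
          integral_sub (h₁.1.mono_set (Set.Ioc_subset_Icc_self.trans hs))
            (h₂.1.mono_set (Set.Ioc_subset_Icc_self.trans hs))]
        module
      conv_lhs => rw [hwx, balInt_eq hx.1 (hwi.mono_set hs), hw0]
      simp)
  exact fun x hx => sub_eq_zero.1 (key x hx)

lemma fwdSol_exists_compact [CompleteSpace E] {ν : Measure ℝ} {M : ℝ → E →L[ℝ] E} {g : ℝ → E} {x₀ D : ℝ} (u₀ : E)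
    (hD : x₀ ≤ D) (hν : ν (Set.Icc x₀ D) < ⊤) (hM : IntegrableOn M (Set.Icc x₀ D) ν)
    (hg : IntegrableOn g (Set.Icc x₀ D) ν)
    (hU : ∀ x ∈ Set.Icc x₀ D, IsUnit (1 - (ν.real {x} / 2) • M x)) :
    ∃ v, FwdSol ν M g x₀ u₀ D v := by
  have : IsFiniteMeasure (ν.restrict (Set.Icc x₀ D)) := ⟨by simpa using hν⟩
  have hx0 : x₀ ∈ Set.Icc x₀ D := ⟨le_rfl, hD⟩
  -- The constant is the left limit at `x₀` of the solution with value `u₀` at `x₀`.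
  obtain ⟨v, hvi, hv⟩ := jump_exists hM hg (isUnit_restrict hU)
    (u₀ - (ν.real {x₀} / 2) • (M x₀ u₀ + g x₀))
  have hv' : ∀ x ∈ Set.Icc x₀ D, v x = u₀ - (ν.real {x₀} / 2) • (M x₀ u₀ + g x₀) +
      ∫ t in Set.Ico x₀ x, (M t (v t) + g t) ∂ν + (ν.real {x} / 2) • (M x (v x) + g x) := by
    intro x hx
    rw [← restrict_restrict_Iio ν hx, ← restrict_real_singleton ν hx]
    exact hv x
  -- At `x₀` both `v x₀` and `u₀` solve the implicit equation with the same data.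
  have hv0 : v x₀ = u₀ := by
    have h := hv' x₀ hx0
    rw [Set.Ico_self, Measure.restrict_empty, integral_zero_measure, add_zero] at h
    have h2 : v x₀ - u₀ = 0 + (ν.real {x₀} / 2) • M x₀ (v x₀ - u₀) := by
      rw [map_sub]
      conv_lhs => rw [h]
      module
    have h3 := (jumpResolvent_eq_iff (hU x₀ hx0) _ _).2 h2
    rw [map_zero] at h3
    exact sub_eq_zero.1 h3
  refine ⟨v, hvi, fun x hx => ?_⟩
  rw [balInt_eq hx.1 (IntegrableOn.mono_set hvi (Set.Icc_subset_Icc_right hx.2)), hv0]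
  conv_lhs => rw [hv' x hx]
  abel

/-- Solutions on the intervals `[x₀, D]`, `D < b`, agree on overlaps by uniqueness, so they glue to
a single function. -/
lemma fwdSol_exists [CompleteSpace E] {ν : Measure ℝ} {M : ℝ → E →L[ℝ] E} {g : ℝ → E} {x₀ b : ℝ} (u₀ : E)
    (hν : ∀ D < b, ν (Set.Icc x₀ D) < ⊤) (hM : ∀ D < b, IntegrableOn M (Set.Icc x₀ D) ν)
    (hg : ∀ D < b, IntegrableOn g (Set.Icc x₀ D) ν)
    (hU : ∀ x ∈ Set.Ico x₀ b, IsUnit (1 - (ν.real {x} / 2) • M x)) :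
    ∃ v, ∀ D < b, FwdSol ν M g x₀ u₀ D v := by
  have hU' : ∀ D < b, ∀ x ∈ Set.Icc x₀ D, IsUnit (1 - (ν.real {x} / 2) • M x) :=
    fun D hD x hx => hU x ⟨hx.1, hx.2.trans_lt hD⟩
  have hex : ∀ D, ∃ v, x₀ ≤ D → D < b → FwdSol ν M g x₀ u₀ D v := by
    intro D
    by_cases h : x₀ ≤ D ∧ D < b
    · obtain ⟨v, hv⟩ := fwdSol_exists_compact u₀ h.1 (hν D h.2) (hM D h.2) (hg D h.2) (hU' D h.2)
      exact ⟨v, fun _ _ => hv⟩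
    · exact ⟨fun _ => 0, fun h1 h2 => absurd ⟨h1, h2⟩ h⟩
  choose V hV using hex
  -- The value at `x` is taken from the solution on `[x₀, x]`.
  refine ⟨fun x => V x x, fun D hD => ?_⟩
  have heq : ∀ x ∈ Set.Icc x₀ D, V x x = V D x := fun x hx =>
    fwdSol_unique (hν x (hx.2.trans_lt hD)) (hM x (hx.2.trans_lt hD)) (hU' x (hx.2.trans_lt hD))
      (hV x hx.1 (hx.2.trans_lt hD)) ((hV D (hx.1.trans hx.2) hD).mono hx.2) ⟨hx.1, le_rfl⟩
  have hfeq : Set.EqOn (fun t => M t (V t t) + g t) (fun t => M t (V D t) + g t)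
      (Set.Icc x₀ D) := fun t ht => by simp only [heq t ht]
  rcases le_or_gt x₀ D with h | h
  · refine ⟨(hV D h hD).1.congr_fun hfeq.symm measurableSet_Icc, fun x hx => ?_⟩
    rw [balInt_congr (hfeq.mono (Set.Icc_subset_Icc_right hx.2))]
    exact (heq x hx).trans ((hV D h hD).2 x hx)
  · simp [FwdSol, Set.Icc_eq_empty (not_le.2 h)]

lemma balInt_map_neg (ν : Measure ℝ) (f : ℝ → E) (c d : ℝ) :
    balInt (ν.map Neg.neg) f c d = balInt ν (fun t => f (-t)) (-d) (-c) := by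
  have h : ν.map Neg.neg = ν.map (MeasurableEquiv.neg ℝ) := rfl
  unfold balInt
  rw [h, setIntegral_map_equiv, setIntegral_map_equiv, add_comm]
  simp

/-- Under the reflection `t ↦ -t`, a forward solution from `-x₀` for the reflected data is a function
solving the pointwise equation backwards from `x₀`. -/
lemma fwdSol_neg_iff {ν : Measure ℝ} {M : ℝ → E →L[ℝ] E} {g : ℝ → E} {x₀ C : ℝ} {u₀ : E}
    {v : ℝ → E} :
    FwdSol (ν.map Neg.neg) (fun t => -M (-t)) (fun t => -g (-t)) (-x₀) u₀ (-C) (fun t => v (-t)) ↔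
      IntegrableOn (fun t => M t (v t) + g t) (Set.Icc C x₀) ν ∧
        ∀ x ∈ Set.Icc C x₀, u₀ = v x + balInt ν (fun t => M t (v t) + g t) x x₀ := by
  have h : ν.map Neg.neg = ν.map (MeasurableEquiv.neg ℝ) := rfl
  have hf : (fun t => (-M (-t)) (v (-t)) + -g (-t)) =
      fun t => -((fun t => M t (v t) + g t) (-t)) := by
    ext t; simp [add_comm]
  have hneg : ∀ (f : ℝ → E) (c d : ℝ), balInt ν (fun t => -f t) c d = -balInt ν f c d := by
    intro f c d; unfold balInt; rw [integral_neg, integral_neg]; module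
  unfold FwdSol
  rw [hf]
  refine and_congr ?_ ?_
  · rw [h, MeasurableEmbedding.integrableOn_map_iff (MeasurableEquiv.neg ℝ).measurableEmbedding]
    have : (MeasurableEquiv.neg ℝ) ⁻¹' Set.Icc (-x₀) (-C) = Set.Icc C x₀ := by
      ext t; simp
    rw [this]
    have h2 : (fun t => -((fun t => M t (v t) + g t) (-t))) ∘ (MeasurableEquiv.neg ℝ) =
        -fun t => M t (v t) + g t := by
      ext t; simp
    rw [h2]
    exact integrable_neg_iff
  · constructor
    · intro H x hx
      have := H (-x) ⟨neg_le_neg hx.2, neg_le_neg hx.1⟩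
      rw [balInt_map_neg] at this
      simp only [neg_neg] at this
      rw [hneg] at this
      rw [this]; abel
    · intro H x hx
      have := H (-x) ⟨le_neg.1 hx.2, neg_le.1 hx.1⟩
      rw [balInt_map_neg]
      simp only [neg_neg]
      rw [hneg]
      rw [this]; abel

/-- The pointwise integral equation on the whole interval `(a, b)`: the integrand is locally integrable
and increments of `v` are symmetric integrals of `M v + g`. -/
def LocSol (ν : Measure ℝ) (M : ℝ → E →L[ℝ] E) (g : ℝ → E) (a b : ℝ) (v : ℝ → E) : Prop :=
  (∀ c d, a < c → d < b → IntegrableOn (fun t => M t (v t) + g t) (Set.Icc c d) ν) ∧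
    ∀ c d, a < c → c ≤ d → d < b → v d = v c + balInt ν (fun t => M t (v t) + g t) c d

section Global

variable {ν : Measure ℝ} {M : ℝ → E →L[ℝ] E} {g : ℝ → E} {a b x₀ : ℝ}

/-- The reflected data satisfy the hypotheses of the forward problem from `-x₀` to `-a`; the condition
on `1 - ½ Δ` for the reflected coefficient is the one on `1 + ½ Δ` for the original one. -/
lemma map_neg_data (hν : ∀ c d, a < c → d < b → ν (Set.Icc c d) < ⊤)
    (hM : ∀ c d, a < c → d < b → IntegrableOn M (Set.Icc c d) ν)
    (hg : ∀ c d, a < c → d < b → IntegrableOn g (Set.Icc c d) ν)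
    (hU : ∀ x ∈ Set.Ioo a b, IsUnit (1 + (ν.real {x} / 2) • M x)) (hx₀ : x₀ ∈ Set.Ioo a b) :
    (∀ D < -a, (ν.map Neg.neg) (Set.Icc (-x₀) D) < ⊤) ∧
    (∀ D < -a, IntegrableOn (fun t => -M (-t)) (Set.Icc (-x₀) D) (ν.map Neg.neg)) ∧
    (∀ D < -a, IntegrableOn (fun t => -g (-t)) (Set.Icc (-x₀) D) (ν.map Neg.neg)) ∧
    ∀ x ∈ Set.Ico (-x₀) (-a), IsUnit (1 - ((ν.map Neg.neg).real {x} / 2) • (-M (-x))) := by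
  have h : ν.map Neg.neg = ν.map (MeasurableEquiv.neg ℝ) := rfl
  have hpre : ∀ D, (MeasurableEquiv.neg ℝ) ⁻¹' Set.Icc (-x₀) D = Set.Icc (-D) x₀ := by
    intro D; ext t; simp [and_comm]
  refine ⟨fun D hD => ?_, fun D hD => ?_, fun D hD => ?_, fun x hx => ?_⟩
  · rw [h, MeasurableEquiv.map_apply, hpre]
    exact hν _ _ (lt_neg.1 hD) hx₀.2
  · rw [h, MeasurableEmbedding.integrableOn_map_iff (MeasurableEquiv.neg ℝ).measurableEmbedding,
      hpre]
    have h2 : (fun t => -M (-t)) ∘ (MeasurableEquiv.neg ℝ) = -M := by ext t; simp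
    rw [h2]
    exact (hM _ _ (lt_neg.1 hD) hx₀.2).neg
  · rw [h, MeasurableEmbedding.integrableOn_map_iff (MeasurableEquiv.neg ℝ).measurableEmbedding,
      hpre]
    have h2 : (fun t => -g (-t)) ∘ (MeasurableEquiv.neg ℝ) = -g := by ext t; simp
    rw [h2]
    exact (hg _ _ (lt_neg.1 hD) hx₀.2).neg
  · have h3 : (ν.map Neg.neg).real {x} = ν.real {-x} := by
      rw [measureReal_def, measureReal_def, h, MeasurableEquiv.map_apply]
      congr 2
      ext t; simp
    rw [h3, smul_neg, sub_neg_eq_add]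
    exact hU _ ⟨lt_neg.1 hx.2, (neg_le.1 hx.1).trans_lt hx₀.2⟩

lemma locSol_exists [CompleteSpace E] (hν : ∀ c d, a < c → d < b → ν (Set.Icc c d) < ⊤)
    (hM : ∀ c d, a < c → d < b → IntegrableOn M (Set.Icc c d) ν)
    (hg : ∀ c d, a < c → d < b → IntegrableOn g (Set.Icc c d) ν)
    (hU₁ : ∀ x ∈ Set.Ioo a b, IsUnit (1 + (ν.real {x} / 2) • M x))
    (hU₂ : ∀ x ∈ Set.Ioo a b, IsUnit (1 - (ν.real {x} / 2) • M x))
    (hx₀ : x₀ ∈ Set.Ioo a b) (u₀ : E) : ∃ v, LocSol ν M g a b v ∧ v x₀ = u₀ := by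
  obtain ⟨p, hp⟩ := fwdSol_exists u₀ (fun D hD => hν _ D hx₀.1 hD) (fun D hD => hM _ D hx₀.1 hD)
    (fun D hD => hg _ D hx₀.1 hD) (fun x hx => hU₂ x ⟨hx₀.1.trans_le hx.1, hx.2⟩)
  obtain ⟨h1, h2, h3, h4⟩ := map_neg_data hν hM hg hU₁ hx₀
  obtain ⟨q', hq'⟩ := fwdSol_exists u₀ h1 h2 h3 h4
  obtain ⟨q, rfl⟩ : ∃ q : ℝ → E, q' = fun t => q (-t) := ⟨fun t => q' (-t), by simp⟩
  have hq : ∀ C, a < C → IntegrableOn (fun t => M t (q t) + g t) (Set.Icc C x₀) ν ∧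
      ∀ x ∈ Set.Icc C x₀, u₀ = q x + balInt ν (fun t => M t (q t) + g t) x x₀ :=
    fun C hC => fwdSol_neg_iff.1 (hq' (-C) (neg_lt_neg hC))
  clear hq' h1 h2 h3 h4
  have hp0 : p x₀ = u₀ := by
    have := (hp x₀ hx₀.2).2 x₀ ⟨le_rfl, le_rfl⟩
    rwa [balInt_self, add_zero] at this
  have hq0 : q x₀ = u₀ := by
    have := (hq x₀ hx₀.1).2 x₀ ⟨le_rfl, le_rfl⟩
    rwa [balInt_self, add_zero, eq_comm] at this
  set v : ℝ → E := fun x => if x₀ ≤ x then p x else q x with hv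
  have hvp : ∀ x, x₀ ≤ x → v x = p x := fun x hx => if_pos hx
  have hvq : ∀ x, x ≤ x₀ → v x = q x := by
    intro x hx
    rcases hx.eq_or_lt with rfl | hx
    · rw [hvp _ le_rfl, hp0, hq0]
    · exact if_neg (not_le.2 hx)
  set f : ℝ → E := fun t => M t (v t) + g t with hf
  have hfp : ∀ d, Set.EqOn (fun t => M t (p t) + g t) f (Set.Icc x₀ d) := fun d t ht => by
    simp only [hf, hvp t ht.1]
  have hfq : ∀ c, Set.EqOn (fun t => M t (q t) + g t) f (Set.Icc c x₀) := fun c t ht => by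
    simp only [hf, hvq t ht.2]
  have hi : ∀ c d, a < c → d < b → IntegrableOn f (Set.Icc c d) ν := by
    intro c d hc hd
    have hR := (hp d hd).1.congr_fun (hfp d) measurableSet_Icc
    have hL := (hq c hc).1.congr_fun (hfq c) measurableSet_Icc
    refine (hL.union hR).mono_set fun t ht => ?_
    rcases le_total t x₀ with h | h
    · exact Or.inl ⟨ht.1, h⟩
    · exact Or.inr ⟨h, ht.2⟩
  have hR : ∀ x, x₀ ≤ x → x < b → v x = u₀ + balInt ν f x₀ x := by
    intro x hx hxb
    rw [hvp x hx, (hp x hxb).2 x ⟨hx, le_rfl⟩, balInt_congr (hfp x)]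
  have hL : ∀ x, x ≤ x₀ → a < x → u₀ = v x + balInt ν f x x₀ := by
    intro x hx hxa
    rw [hvq x hx, ← balInt_congr (hfq x)]
    exact (hq x hxa).2 x ⟨le_rfl, hx⟩
  refine ⟨v, ⟨hi, fun c d hc hcd hd => ?_⟩, by rw [hvp _ le_rfl, hp0]⟩
  rcases le_total x₀ c with h | h
  · rw [hR c h (hcd.trans_lt hd), hR d (h.trans hcd) hd,
      ← balInt_add h hcd (hi _ _ hx₀.1 hd), add_assoc]
  rcases le_total x₀ d with h' | h'
  · rw [hR d h' hd, ← balInt_add h h' (hi _ _ hc hd), ← add_assoc, ← hL c h hc]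
  · have e1 := hL c h hc
    rw [← balInt_add hcd h' (hi _ _ hc hx₀.2), ← add_assoc] at e1
    exact (add_right_cancel (e1.symm.trans (hL d h' (hc.trans_le hcd)))).symm

lemma locSol_unique [CompleteSpace E] (hν : ∀ c d, a < c → d < b → ν (Set.Icc c d) < ⊤)
    (hM : ∀ c d, a < c → d < b → IntegrableOn M (Set.Icc c d) ν)
    (hg : ∀ c d, a < c → d < b → IntegrableOn g (Set.Icc c d) ν)
    (hU₁ : ∀ x ∈ Set.Ioo a b, IsUnit (1 + (ν.real {x} / 2) • M x))
    (hU₂ : ∀ x ∈ Set.Ioo a b, IsUnit (1 - (ν.real {x} / 2) • M x))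
    (hx₀ : x₀ ∈ Set.Ioo a b) {v w : ℝ → E} (hv : LocSol ν M g a b v) (hw : LocSol ν M g a b w)
    (hvw : v x₀ = w x₀) : Set.EqOn v w (Set.Ioo a b) := by
  intro x hx
  rcases le_total x₀ x with h | h
  · have H : ∀ z : ℝ → E, LocSol ν M g a b z → FwdSol ν M g x₀ (z x₀) x z := fun z hz =>
      ⟨hz.1 _ _ hx₀.1 hx.2, fun y hy => hz.2 _ _ hx₀.1 hy.1 (hy.2.trans_lt hx.2)⟩
    refine fwdSol_unique (hν _ _ hx₀.1 hx.2) (hM _ _ hx₀.1 hx.2)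
      (fun y hy => hU₂ y ⟨hx₀.1.trans_le hy.1, hy.2.trans_lt hx.2⟩) (H v hv) ?_ ⟨h, le_rfl⟩
    rw [hvw]; exact H w hw
  · have H : ∀ z : ℝ → E, LocSol ν M g a b z →
        FwdSol (ν.map Neg.neg) (fun t => -M (-t)) (fun t => -g (-t)) (-x₀) (z x₀) (-x)
          (fun t => z (-t)) := fun z hz =>
      fwdSol_neg_iff.2 ⟨hz.1 _ _ hx.1 hx₀.2,
        fun y hy => hz.2 _ _ (hx.1.trans_le hy.1) hy.2 hx₀.2⟩
    obtain ⟨h1, h2, -, h4⟩ := map_neg_data hν hM hg hU₁ hx₀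
    have hxa : -x < -a := neg_lt_neg hx.1
    have h5 := fwdSol_unique (h1 _ hxa) (h2 _ hxa)
      (fun y hy => h4 y ⟨hy.1, hy.2.trans_lt hxa⟩) (H v hv) (by rw [hvw]; exact H w hw)
      (x := -x) ⟨neg_le_neg h, le_rfl⟩
    simpa using h5

end Global

end Balanced

/-! ### One-sided limits and bounded variation -/

section OneSided

variable {E : Type*} [NormedAddCommGroup E] [NormedSpace ℝ E]

/-- Dominated convergence for integrals of a fixed function over varying sets. -/
lemma tendsto_setIntegral_sets {ν : Measure ℝ} {f : ℝ → E} {K S₀ : Set ℝ} {S : ℝ → Set ℝ}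
    {l : Filter ℝ} [l.IsCountablyGenerated] (hf : IntegrableOn f K ν) (hK : MeasurableSet K)
    (hS : ∀ s, MeasurableSet (S s)) (hS₀ : MeasurableSet S₀) (hSK : ∀ᶠ s in l, S s ⊆ K)
    (hlim : ∀ t, ∀ᶠ s in l, (t ∈ S s ↔ t ∈ S₀)) :
    Tendsto (fun s => ∫ t in S s, f t ∂ν) l (nhds (∫ t in S₀, f t ∂ν)) := by
  simp_rw [← integral_indicator (hS _), ← integral_indicator hS₀]
  refine tendsto_integral_filter_of_dominated_convergence (fun t => ‖K.indicator f t‖) ?_ ?_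
    (hf.integrable_indicator hK).norm ?_
  · filter_upwards [hSK] with s hs
    exact ((hf.mono_set hs).integrable_indicator (hS s)).aestronglyMeasurable
  · filter_upwards [hSK] with s hs
    refine Eventually.of_forall fun t => ?_
    by_cases ht : t ∈ S s
    · rw [Set.indicator_of_mem ht, Set.indicator_of_mem (hs ht)]
    · rw [Set.indicator_of_notMem ht, norm_zero]; exact norm_nonneg _
  · refine Eventually.of_forall fun t => tendsto_const_nhds.congr' ?_
    filter_upwards [hlim t] with s hs
    by_cases ht : t ∈ S₀
    · rw [Set.indicator_of_mem ht, Set.indicator_of_mem (hs.2 ht)]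
    · rw [Set.indicator_of_notMem ht, Set.indicator_of_notMem (fun h => ht (hs.1 h))]

lemma tendsto_integral_Ico_left {ν : Measure ℝ} {f : ℝ → E} {c x : ℝ} (hc : c < x)
    (hf : IntegrableOn f (Set.Icc c x) ν) :
    Tendsto (fun s => ∫ t in Set.Ico s x, f t ∂ν) (nhdsWithin x (Set.Iio x)) (nhds 0) := by
  have := tendsto_setIntegral_sets (l := nhdsWithin x (Set.Iio x)) (S := fun s => Set.Ico s x)
    (S₀ := ∅) hf measurableSet_Icc (fun s => measurableSet_Ico) MeasurableSet.empty ?_ ?_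
  · simpa using this
  · filter_upwards [Ioo_mem_nhdsLT hc] with s hs
    exact fun t ht => ⟨hs.1.le.trans ht.1, ht.2.le⟩
  · intro t
    rcases lt_or_ge t x with h | h
    · filter_upwards [Ioo_mem_nhdsLT h] with s hs
      simp [hs.1]
    · exact Eventually.of_forall fun s => by simp [h]

lemma tendsto_integral_Ico_right [CompleteSpace E] {ν : Measure ℝ} {f : ℝ → E} {x d : ℝ}
    (hd : x < d) (hf : IntegrableOn f (Set.Icc x d) ν) :
    Tendsto (fun s => ∫ t in Set.Ico x s, f t ∂ν) (nhdsWithin x (Set.Ioi x))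
      (nhds (ν.real {x} • f x)) := by
  rw [← integral_singleton]
  refine tendsto_setIntegral_sets (l := nhdsWithin x (Set.Ioi x)) (S := fun s => Set.Ico x s)
    hf measurableSet_Icc (fun s => measurableSet_Ico) (measurableSet_singleton x) ?_ ?_
  · filter_upwards [Ioo_mem_nhdsGT hd] with s hs
    exact fun t ht => ⟨ht.1, ht.2.le.trans hs.2.le⟩
  · intro t
    rcases lt_trichotomy t x with h | h | h
    · exact Eventually.of_forall fun s => by simp [h.not_ge, h.ne]
    · subst h
      filter_upwards [self_mem_nhdsWithin] with s hs
      simpa using hs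
    · filter_upwards [Ioo_mem_nhdsGT h] with s hs
      simp [hs.2.le, h.ne']

lemma tendsto_integral_Ioc_left [CompleteSpace E] {ν : Measure ℝ} {f : ℝ → E} {c x : ℝ}
    (hc : c < x) (hf : IntegrableOn f (Set.Icc c x) ν) :
    Tendsto (fun s => ∫ t in Set.Ioc s x, f t ∂ν) (nhdsWithin x (Set.Iio x))
      (nhds (ν.real {x} • f x)) := by
  rw [← integral_singleton]
  refine tendsto_setIntegral_sets (l := nhdsWithin x (Set.Iio x)) (S := fun s => Set.Ioc s x)
    hf measurableSet_Icc (fun s => measurableSet_Ioc) (measurableSet_singleton x) ?_ ?_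
  · filter_upwards [Ioo_mem_nhdsLT hc] with s hs
    exact fun t ht => ⟨hs.1.le.trans ht.1.le, ht.2⟩
  · intro t
    rcases lt_trichotomy t x with h | h | h
    · filter_upwards [Ioo_mem_nhdsLT h] with s hs
      simp [h.ne, hs.1.not_gt]
    · subst h
      filter_upwards [self_mem_nhdsWithin] with s hs
      simpa using hs
    · exact Eventually.of_forall fun s => by simp [h.not_ge, h.ne']

lemma tendsto_integral_Ioc_right {ν : Measure ℝ} {f : ℝ → E} {x d : ℝ} (hd : x < d)
    (hf : IntegrableOn f (Set.Icc x d) ν) :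
    Tendsto (fun s => ∫ t in Set.Ioc x s, f t ∂ν) (nhdsWithin x (Set.Ioi x)) (nhds 0) := by
  have := tendsto_setIntegral_sets (l := nhdsWithin x (Set.Ioi x)) (S := fun s => Set.Ioc x s)
    (S₀ := ∅) hf measurableSet_Icc (fun s => measurableSet_Ioc) MeasurableSet.empty ?_ ?_
  · simpa using this
  · filter_upwards [Ioo_mem_nhdsGT hd] with s hs
    exact fun t ht => ⟨ht.1.le, ht.2.trans hs.2.le⟩
  · intro t
    rcases lt_or_ge x t with h | h
    · filter_upwards [Ioo_mem_nhdsGT h] with s hs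
      simp [hs.2]
    · exact Eventually.of_forall fun s => by simp [h]

lemma norm_balInt_le (ν : Measure ℝ) (f : ℝ → E) (c d : ℝ) :
    ‖balInt ν f c d‖ ≤ balInt ν (fun t => ‖f t‖) c d := by
  unfold balInt
  rw [norm_smul, smul_eq_mul, Real.norm_of_nonneg (by norm_num)]
  refine mul_le_mul_of_nonneg_left ((norm_add_le _ _).trans ?_) (by norm_num)
  exact add_le_add (norm_integral_le_integral_norm _) (norm_integral_le_integral_norm _)

lemma tendsto_balInt_left [CompleteSpace E] {ν : Measure ℝ} {f : ℝ → E} {c x : ℝ}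
    (hc : c < x) (hf : IntegrableOn f (Set.Icc c x) ν) :
    Tendsto (fun s => balInt ν f s x) (nhdsWithin x (Set.Iio x))
      (nhds ((ν.real {x} / 2) • f x)) := by
  have h := ((tendsto_integral_Ico_left hc hf).add
    (tendsto_integral_Ioc_left hc hf)).const_smul (1 / 2 : ℝ)
  have e : (ν.real {x} / 2) • f x = (1 / 2 : ℝ) • (0 + ν.real {x} • f x) := by module
  rw [e]
  exact h

lemma tendsto_balInt_right [CompleteSpace E] {ν : Measure ℝ} {f : ℝ → E} {x d : ℝ}
    (hd : x < d) (hf : IntegrableOn f (Set.Icc x d) ν) :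
    Tendsto (fun s => balInt ν f x s) (nhdsWithin x (Set.Ioi x))
      (nhds ((ν.real {x} / 2) • f x)) := by
  have h := ((tendsto_integral_Ico_right hd hf).add
    (tendsto_integral_Ioc_right hd hf)).const_smul (1 / 2 : ℝ)
  have e : (ν.real {x} / 2) • f x = (1 / 2 : ℝ) • (ν.real {x} • f x + 0) := by module
  rw [e]
  exact h

variable {ν : Measure ℝ} {M : ℝ → E →L[ℝ] E} {g : ℝ → E} {a b : ℝ} {v : ℝ → E}

/-- The increments of a solution are dominated by those of the monotone function
`x ↦ balInt ν ‖M v + g‖ c x`. -/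
lemma LocSol.locallyBoundedVariationOn (h : LocSol ν M g a b v) :
    LocallyBoundedVariationOn v (Set.Ioo a b) := by
  intro c d hc hd
  set f : ℝ → E := fun t => M t (v t) + g t with hf
  set G : ℝ → ℝ := fun x => balInt ν (fun t => ‖f t‖) c x with hG
  set s : Set ℝ := Set.Ioo a b ∩ Set.Icc c d with hs
  have hsub : ∀ x ∈ s, ∀ y ∈ s, x ≤ y → ‖v y - v x‖ ≤ G y - G x := by
    intro x hx y hy hxy
    have e1 : G x + balInt ν (fun t => ‖f t‖) x y = G y :=
      balInt_add hx.2.1 hxy (h.1 c y hc.1 hy.1.2).norm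
    rw [h.2 x y hx.1.1 hxy hy.1.2, add_sub_cancel_left, ← e1, add_sub_cancel_left]
    exact norm_balInt_le _ _ _ _
  have hmono : MonotoneOn G s := fun x hx y hy hxy =>
    sub_nonneg.1 ((norm_nonneg _).trans (hsub x hx y hy hxy))
  have hle : eVariationOn v s ≤ eVariationOn G s := by
    refine iSup_mono fun p => Finset.sum_le_sum fun i _ => ?_
    have := hsub _ (p.2.2.2 i) _ (p.2.2.2 (i + 1)) (p.2.2.1 i.le_succ)
    rw [edist_dist, edist_dist]
    refine ENNReal.ofReal_le_ofReal ?_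
    rw [dist_eq_norm, Real.dist_eq]
    exact this.trans (le_abs_self _)
  rcases le_or_gt c d with hcd | hcd
  · refine (hle.trans_lt ?_).ne
    have h1 : c ∈ s := ⟨hc, le_rfl, hcd⟩
    have h2 : d ∈ s := ⟨hd, hcd, le_rfl⟩
    have := hmono.locallyBoundedVariationOn c d h1 h2
    have hss : s ∩ Set.Icc c d = s := Set.inter_eq_left.2 Set.inter_subset_right
    rw [hss] at this
    exact this.lt_top
  · have : s = ∅ := by rw [hs, Set.Icc_eq_empty (not_le.2 hcd), Set.inter_empty]
    show eVariationOn v s ≠ ⊤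
    rw [this]
    simp

variable [CompleteSpace E]

lemma LocSol.tendsto_left (h : LocSol ν M g a b v) {x : ℝ} (hx : x ∈ Set.Ioo a b) :
    Tendsto v (nhdsWithin x (Set.Iio x)) (nhds (v x - (ν.real {x} / 2) • (M x (v x) + g x))) := by
  obtain ⟨c, hac, hcx⟩ := exists_between hx.1
  refine (tendsto_const_nhds.sub (tendsto_balInt_left hcx (h.1 c x hac hx.2))).congr' ?_
  filter_upwards [Ioo_mem_nhdsLT hcx] with s hs
  exact sub_eq_of_eq_add (h.2 s x (hac.trans hs.1) hs.2.le hx.2)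

lemma LocSol.tendsto_right (h : LocSol ν M g a b v) {x : ℝ} (hx : x ∈ Set.Ioo a b) :
    Tendsto v (nhdsWithin x (Set.Ioi x)) (nhds (v x + (ν.real {x} / 2) • (M x (v x) + g x))) := by
  obtain ⟨d, hxd, hdb⟩ := exists_between hx.2
  refine (tendsto_const_nhds.add (tendsto_balInt_right hxd (h.1 x d hx.1 hdb))).congr' ?_
  filter_upwards [Ioo_mem_nhdsGT hxd] with s hs
  exact (h.2 x s hx.1 hs.1.le (hs.2.trans hdb)).symm

lemma LocSol.leftLim_eq (h : LocSol ν M g a b v) {x : ℝ} (hx : x ∈ Set.Ioo a b) :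
    leftLim v x = v x - (ν.real {x} / 2) • (M x (v x) + g x) :=
  leftLim_eq_of_tendsto (h.tendsto_left hx)

lemma LocSol.rightLim_eq (h : LocSol ν M g a b v) {x : ℝ} (hx : x ∈ Set.Ioo a b) :
    rightLim v x = v x + (ν.real {x} / 2) • (M x (v x) + g x) :=
  rightLim_eq_of_tendsto (h.tendsto_right hx)

lemma LocSol.leftLim_sub (h : LocSol ν M g a b v) {c d : ℝ} (hc : a < c) (hcd : c ≤ d)
    (hd : d < b) : leftLim v d - leftLim v c = ∫ t in Set.Ico c d, (M t (v t) + g t) ∂ν := by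
  rw [h.leftLim_eq ⟨hc, hcd.trans_lt hd⟩, h.leftLim_eq ⟨hc.trans_le hcd, hd⟩]
  have e := h.2 c d hc hcd hd
  rw [balInt_eq hcd (h.1 c d hc hd)] at e
  have e' : v d - v c = ∫ t in Set.Ico c d, (M t (v t) + g t) ∂ν +
      (ν.real {d} / 2) • (M d (v d) + g d) - (ν.real {c} / 2) • (M c (v c) + g c) := by
    conv_lhs => rw [e]
    abel
  rw [sub_sub_sub_comm, e']
  abel

/-- A balanced function whose left limits have the increments `∫_{[c,d)} (M v + g) dν` solves the
pointwise equation. Letting `d` decrease to `c` in this relation gives the jump of `v` at `c`, because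
`v` and its left-limit function have the same right limits. -/
lemma locSol_of_leftLim
    (hfi : ∀ c d, a < c → d < b → IntegrableOn (fun t => M t (v t) + g t) (Set.Icc c d) ν)
    (hlim : ∀ x ∈ Set.Ioo a b, Tendsto v (nhdsWithin x (Set.Ioi x)) (nhds (rightLim v x)))
    (hbal : ∀ x ∈ Set.Ioo a b, v x = (1 / 2 : ℝ) • (leftLim v x + rightLim v x))
    (hint : ∀ c d, a < c → c ≤ d → d < b →
      leftLim v d - leftLim v c = ∫ t in Set.Ico c d, (M t (v t) + g t) ∂ν) :
    LocSol ν M g a b v := by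
  have hjump : ∀ x ∈ Set.Ioo a b,
      rightLim v x = leftLim v x + ν.real {x} • (M x (v x) + g x) := by
    intro x hx
    rw [← rightLim_leftLim (hlim x hx)]
    refine rightLim_eq_of_tendsto ?_
    obtain ⟨d, hxd, hdb⟩ := exists_between hx.2
    refine (tendsto_const_nhds.add (tendsto_integral_Ico_right hxd (hfi x d hx.1 hdb))).congr' ?_
    filter_upwards [Ioo_mem_nhdsGT hxd] with s hs
    rw [← hint x s hx.1 hs.1.le (hs.2.trans hdb)]
    abel
  have hval : ∀ x ∈ Set.Ioo a b, v x = leftLim v x + (ν.real {x} / 2) • (M x (v x) + g x) := by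
    intro x hx
    conv_lhs => rw [hbal x hx, hjump x hx]
    module
  refine ⟨hfi, fun c d hc hcd hd => ?_⟩
  rw [balInt_eq hcd (hfi c d hc hd), ← hint c d hc hcd hd]
  have e1 := hval c ⟨hc, hcd.trans_lt hd⟩
  have e2 := hval d ⟨hc.trans_le hcd, hd⟩
  generalize M c (v c) + g c = p at *
  generalize M d (v d) + g d = q at *
  rw [e1, e2]
  abel

end OneSided

/-! ### Matrix coefficients -/

section MatrixSystem

variable {n : ℕ}

/-- A complex matrix acting on `ℂⁿ`, as a continuous `ℝ`-linear operator. The scalars are real because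
the jumps of the measure are. -/
noncomputable def mulVecCLM (A : Matrix (Fin n) (Fin n) ℂ) : (Fin n → ℂ) →L[ℝ] (Fin n → ℂ) :=
  LinearMap.toContinuousLinearMap ((Matrix.mulVecLin A).restrictScalars ℝ)

@[simp] lemma mulVecCLM_apply (A : Matrix (Fin n) (Fin n) ℂ) (v : Fin n → ℂ) :
    mulVecCLM A v = A.mulVec v := rfl

lemma isUnit_mulVecCLM {A : Matrix (Fin n) (Fin n) ℂ} (hA : IsUnit A) : IsUnit (mulVecCLM A) := by
  obtain ⟨u, rfl⟩ := hA
  refine isUnit_iff_exists.2 ⟨mulVecCLM (↑u⁻¹ : Matrix (Fin n) (Fin n) ℂ), ?_, ?_⟩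
  · ext1 v
    simp [Matrix.mulVec_mulVec]
  · ext1 v
    simp [Matrix.mulVec_mulVec]

lemma mulVecCLM_one_add (c : ℝ) (A : Matrix (Fin n) (Fin n) ℂ) :
    mulVecCLM (1 + c • A) = 1 + c • mulVecCLM A := by
  ext1 v
  simp [Matrix.add_mulVec, Matrix.smul_mulVec]

lemma mulVecCLM_one_sub (c : ℝ) (A : Matrix (Fin n) (Fin n) ℂ) :
    mulVecCLM (1 - c • A) = 1 - c • mulVecCLM A := by
  ext1 v
  simp [Matrix.sub_mulVec, Matrix.smul_mulVec]

/-- The operator with the single matrix entry `z` in position `(i, j)`, as a continuous linear function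
of `z`. -/
noncomputable def entryCLM (i j : Fin n) : ℂ →L[ℝ] ((Fin n → ℂ) →L[ℝ] (Fin n → ℂ)) :=
  LinearMap.toContinuousLinearMap
    { toFun := fun z => mulVecCLM (Matrix.single i j z)
      map_add' := fun z w => by ext1 v; simp [Matrix.single_add, Matrix.add_mulVec]
      map_smul' := fun c z => by
        ext1 v
        simp only [mulVecCLM_apply, smul_apply, RingHom.id_apply]
        rw [← Matrix.smul_single, Matrix.smul_mulVec] }

lemma mulVecCLM_eq_sum (A : Matrix (Fin n) (Fin n) ℂ) :
    mulVecCLM A = ∑ i, ∑ j, entryCLM i j (A i j) := by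
  ext1 v
  conv_lhs => rw [Matrix.matrix_eq_sum_single A]
  simp [entryCLM, Matrix.sum_mulVec]

lemma integrable_sum_entries {F : Type*} [NormedAddCommGroup F] [NormedSpace ℝ F]
    {μ : Measure ℝ} {M : ℝ → Matrix (Fin n) (Fin n) ℂ} (T : Fin n → Fin n → ℂ →L[ℝ] F)
    (hM : ∀ i j, Integrable (fun t => M t i j) μ) :
    Integrable (fun t => ∑ i, ∑ j, T i j (M t i j)) μ :=
  integrable_finsetSum _ fun i _ => integrable_finsetSum _ fun j _ =>
    (T i j).integrable_comp (hM i j)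

/-- Entrywise integrability implies integrability in the operator norm. -/
lemma integrable_mulVecCLM {μ : Measure ℝ} {M : ℝ → Matrix (Fin n) (Fin n) ℂ}
    (hM : ∀ i j, Integrable (fun t => M t i j) μ) : Integrable (fun t => mulVecCLM (M t)) μ := by
  have h : (fun t => mulVecCLM (M t)) = fun t => ∑ i, ∑ j, entryCLM i j (M t i j) :=
    funext fun t => mulVecCLM_eq_sum (M t)
  rw [h]
  exact integrable_sum_entries entryCLM hM

lemma aemeasurable_of_bv_real {μ : Measure ℝ} {f : ℝ → ℝ} {s : Set ℝ} (hs : MeasurableSet s)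
    (hf : LocallyBoundedVariationOn f s) : AEMeasurable f (μ.restrict s) := by
  obtain ⟨p, q, hp, hq, rfl⟩ := hf.exists_monotoneOn_sub_monotoneOn
  exact (aemeasurable_restrict_of_monotoneOn hs hp).sub (aemeasurable_restrict_of_monotoneOn hs hq)

lemma aestronglyMeasurable_of_bv {μ : Measure ℝ} {f : ℝ → Fin n → ℂ} {s : Set ℝ}
    (hs : MeasurableSet s) (hf : LocallyBoundedVariationOn f s) :
    AEStronglyMeasurable f (μ.restrict s) := by
  refine AEMeasurable.aestronglyMeasurable (aemeasurable_pi_lambda _ fun i => ?_)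
  have h : LocallyBoundedVariationOn (fun t => f t i) s :=
    (LipschitzWith.eval i).comp_locallyBoundedVariationOn hf
  have hre : LocallyBoundedVariationOn (fun t => (f t i).re) s :=
    Complex.reCLM.lipschitz.comp_locallyBoundedVariationOn h
  have him : LocallyBoundedVariationOn (fun t => (f t i).im) s :=
    Complex.imCLM.lipschitz.comp_locallyBoundedVariationOn h
  have := (Complex.measurable_ofReal.comp_aemeasurable (aemeasurable_of_bv_real (μ := μ) hs hre)).add
    ((Complex.measurable_ofReal.comp_aemeasurable
      (aemeasurable_of_bv_real (μ := μ) hs him)).mul_const Complex.I)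
  exact this.congr (Eventually.of_forall fun t => Complex.re_add_im (f t i))

variable {a b : ℝ} {ν : Measure ℝ} {M : ℝ → Matrix (Fin n) (Fin n) ℂ} {g : ℝ → Fin n → ℂ}
  {v : ℝ → Fin n → ℂ}

lemma half_smul_eq_div (w : Fin n → ℂ) : (1 / 2 : ℝ) • w = w / 2 := by
  ext i
  simp [Complex.real_smul, div_eq_inv_mul]

/-- A solution of the pointwise equation has the one-sided limits `v ∓ ½ ν{x} (M v + g)`, hence is
balanced. -/
lemma LocSol.isBalancedSolution (h : LocSol ν (fun t => mulVecCLM (M t)) g a b v) :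
    IsBalancedSolution a b ν M g v := by
  refine ⟨h.locallyBoundedVariationOn, fun x hx => ⟨?_, ?_, ?_⟩, fun c d hc hcd hd =>
    h.leftLim_sub hc hcd hd⟩
  · exact tendsto_leftLim_of_tendsto ⟨_, h.tendsto_left hx⟩
  · exact tendsto_rightLim_of_tendsto ⟨_, h.tendsto_right hx⟩
  · rw [h.leftLim_eq hx, h.rightLim_eq hx, ← half_smul_eq_div]
    module

/-- A balanced solution solves the pointwise equation. The integrability of `M v + g` on compact
intervals, needed to split integrals, holds because a function of bounded variation is bounded and
measurable. -/
lemma IsBalancedSolution.locSol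
    (hM : ∀ (i j : Fin n) (c d : ℝ), a < c → d < b →
      IntegrableOn (fun t => M t i j) (Set.Icc c d) ν)
    (hg : ∀ c d : ℝ, a < c → d < b → IntegrableOn g (Set.Icc c d) ν)
    (h : IsBalancedSolution a b ν M g v) : LocSol ν (fun t => mulVecCLM (M t)) g a b v := by
  obtain ⟨hbv, hbal, hint⟩ := h
  refine locSol_of_leftLim (fun c d hc hd => ?_) (fun x hx => (hbal x hx).2.1)
    (fun x hx => by rw [half_smul_eq_div]; exact (hbal x hx).2.2) hint
  refine Integrable.add ?_ (hg c d hc hd)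
  rcases lt_or_ge d c with hcd | hcd
  · rw [Set.Icc_eq_empty (not_le.2 hcd), Measure.restrict_empty]
    exact integrable_zero_measure
  have hsub : Set.Icc c d ⊆ Set.Ioo a b := fun t ht => ⟨hc.trans_le ht.1, ht.2.trans_lt hd⟩
  have hbv' : BoundedVariationOn v (Set.Icc c d) := by
    have := hbv c d (hsub ⟨le_rfl, hcd⟩) (hsub ⟨hcd, le_rfl⟩)
    rwa [Set.inter_eq_right.2 hsub] at this
  refine integrable_clm_apply (K := ‖v c‖ + (eVariationOn v (Set.Icc c d)).toReal)
    (integrable_mulVecCLM fun i j => hM i j c d hc hd)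
    (aestronglyMeasurable_of_bv measurableSet_Icc hbv'.locallyBoundedVariationOn) ?_
  filter_upwards [ae_restrict_mem measurableSet_Icc] with t ht
  have := hbv'.dist_le ht (⟨le_rfl, hcd⟩ : c ∈ Set.Icc c d)
  rw [dist_eq_norm] at this
  have h2 := norm_sub_norm_le (v t) (v c)
  linarith

end MatrixSystem

/-- **Existence and uniqueness of balanced solutions.**  If the matrices
`I ± Δ_r(x)/2 = I ± (ν({x})/2)·M(x)` are invertible for every `x ∈ (a,b)`, then for every
`x0 ∈ (a,b)` and `u0 ∈ ℂⁿ` there is exactly one balanced solution `u` of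
`u' = r u + g dν` on `(a,b)` with `u(x0) = u0`. -/
theorem stmt_2 (a b : ℝ) (n : ℕ) (ν : Measure ℝ)
    (hν : ∀ c d : ℝ, a < c → d < b → ν (Set.Icc c d) < ⊤)
    (M : ℝ → Matrix (Fin n) (Fin n) ℂ)
    (hM : ∀ (i j : Fin n) (c d : ℝ), a < c → d < b →
      IntegrableOn (fun t => M t i j) (Set.Icc c d) ν)
    (g : ℝ → Fin n → ℂ)
    (hg : ∀ c d : ℝ, a < c → d < b → IntegrableOn g (Set.Icc c d) ν)
    (hjump : ∀ x ∈ Set.Ioo a b,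
      IsUnit ((1 : Matrix (Fin n) (Fin n) ℂ) + ((ν {x}).toReal / 2) • M x) ∧
      IsUnit ((1 : Matrix (Fin n) (Fin n) ℂ) - ((ν {x}).toReal / 2) • M x))
    (x0 : ℝ) (hx0 : x0 ∈ Set.Ioo a b) (u0 : Fin n → ℂ) :
    ∃ u : ℝ → Fin n → ℂ,
      (IsBalancedSolution a b ν M g u ∧ u x0 = u0) ∧
      ∀ v : ℝ → Fin n → ℂ, IsBalancedSolution a b ν M g v → v x0 = u0 →
        Set.EqOn u v (Set.Ioo a b) := by
  have hM' : ∀ c d, a < c → d < b → IntegrableOn (fun t => mulVecCLM (M t)) (Set.Icc c d) ν :=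
    fun c d hc hd => integrable_mulVecCLM fun i j => hM i j c d hc hd
  have hU₁ : ∀ x ∈ Set.Ioo a b, IsUnit (1 + (ν.real {x} / 2) • mulVecCLM (M x)) := fun x hx => by
    rw [← mulVecCLM_one_add]
    exact isUnit_mulVecCLM (hjump x hx).1
  have hU₂ : ∀ x ∈ Set.Ioo a b, IsUnit (1 - (ν.real {x} / 2) • mulVecCLM (M x)) := fun x hx => by
    rw [← mulVecCLM_one_sub]
    exact isUnit_mulVecCLM (hjump x hx).2
  obtain ⟨u, hu, hu0⟩ := locSol_exists hν hM' hg hU₁ hU₂ hx0 u0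
  exact ⟨u, ⟨hu.isBalancedSolution, hu0⟩, fun v hv hv0 =>
    locSol_unique hν hM' hg hU₁ hU₂ hx0 hu (hv.locSol hM hg) (hu0.trans hv0.symm)⟩
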